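/- There exists an equilateral triangle with all three vertices in ℤ³ and side length l > 0 if and only if l = √(2(m² - mn + n²)) for some integers m, n not both zero. -/

import Mathlib

/-- Rounding to a nearest integer. -/
lemma eq_aux_round (x t : ℤ) (ht : 0 < t) : ∃ y : ℤ, 4 * (x - t * y) ^ 2 ≤ t ^ 2 := by
  refine ⟨(2 * x + t) / (2 * t), ?_⟩
  have h1 := Int.mul_ediv_add_emod (2 * x + t) (2 * t)
  have h2 := Int.emod_nonneg (2 * x + t) (show 2 * t ≠ 0 by omega)
  have h3 := Int.emod_lt_of_pos (2 * x + t) (show 0 < 2 * t by omega)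
  generalize (2 * x + t) / (2 * t) = y at *
  generalize (2 * x + t) % (2 * t) = r at *
  have h4 : 2 * (x - t * y) = r - t := by linarith
  have h5 : 4 * (x - t * y) ^ 2 = (r - t) ^ 2 := by rw [← h4]; ring
  rw [h5]
  nlinarith

/-- Davenport-Cassels descent for the form `x² - xy + y²`. -/
lemma eq_aux_descent (k : ℤ) : ∀ (T : ℕ) (t x y : ℤ), t.toNat = T → 0 < t →
    k * t ^ 2 = x ^ 2 - x * y + y ^ 2 → ∃ m n : ℤ, k = m ^ 2 - m * n + n ^ 2 := by
  intro T
  induction T using Nat.strong_induction_on with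
  | _ T ih =>
    intro t x y hT ht h
    obtain ⟨m, hm⟩ := eq_aux_round x t ht
    obtain ⟨n, hn⟩ := eq_aux_round y t ht
    by_cases h0 : x - t * m = 0 ∧ y - t * n = 0
    · obtain ⟨h1, h2⟩ := h0
      refine ⟨m, n, ?_⟩
      have hx : x = t * m := by linarith
      have hy : y = t * n := by linarith
      subst hx hy
      have : t ^ 2 ≠ 0 := by positivity
      apply mul_right_cancel₀ this
      rw [h]; ring
    · set p := x - t * m with hp
      set q := y - t * n with hq
      have hpos : 0 < p ^ 2 - p * q + q ^ 2 := by
        rcases not_and_or.mp h0 with h1 | h1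
        · have : 0 < p ^ 2 := by positivity
          nlinarith [sq_nonneg (p - 2 * q)]
        · have : 0 < q ^ 2 := by positivity
          nlinarith [sq_nonneg (q - 2 * p)]
      have hlt : p ^ 2 - p * q + q ^ 2 < t ^ 2 := by
        have : 0 < t ^ 2 := by positivity
        nlinarith [sq_nonneg (p + q)]
      set B := 2 * x * m - x * n - y * m + 2 * y * n with hB
      set F := m ^ 2 - m * n + n ^ 2 with hF
      have key : t * (k * t - B + t * F) = p ^ 2 - p * q + q ^ 2 := by
        have : t * (k * t - B + t * F) = k * t ^ 2 - t * B + t ^ 2 * F := by ring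
        rw [this, h, hB, hF, hp, hq]; ring
      have ht1 : 0 < k * t - B + t * F := by
        rw [← key] at hpos
        exact pos_of_mul_pos_right hpos ht.le
      have ht2 : k * t - B + t * F < t := by
        rw [← key, sq] at hlt
        exact lt_of_mul_lt_mul_left hlt ht.le
      refine ih (k * t - B + t * F).toNat (by omega) _
        ((F - k) * x + (2 * k * t - B) * m) ((F - k) * y + (2 * k * t - B) * n) rfl ht1 ?_
      have e : ((F - k) * x + (2 * k * t - B) * m) ^ 2
          - ((F - k) * x + (2 * k * t - B) * m) * ((F - k) * y + (2 * k * t - B) * n)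
          + ((F - k) * y + (2 * k * t - B) * n) ^ 2
          = (F - k) ^ 2 * (x ^ 2 - x * y + y ^ 2) + (F - k) * (2 * k * t - B) * B
            + (2 * k * t - B) ^ 2 * F := by
        generalize hG : F - k = G
        generalize hH : 2 * k * t - B = H
        rw [hB, hF]; ring
      rw [e, ← h]; ring

lemma eq_aux_main (a b c d e f k : ℤ) (hk : 0 < k)
    (h1 : a ^ 2 + b ^ 2 + c ^ 2 = 2 * k) (h2 : d ^ 2 + e ^ 2 + f ^ 2 = 2 * k)
    (h3 : a * d + b * e + c * f = k) : ∃ m n : ℤ, k = m ^ 2 - m * n + n ^ 2 := by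
  obtain ⟨p, hp⟩ : ∃ p, p = a - e + f - c := ⟨_, rfl⟩
  obtain ⟨q, hq⟩ : ∃ q, q = d + b - e - c := ⟨_, rfl⟩
  obtain ⟨r, hr⟩ : ∃ r, r = a - f + e - b := ⟨_, rfl⟩
  obtain ⟨s, hs⟩ : ∃ s, s = d + c - f - b := ⟨_, rfl⟩
  obtain ⟨v, hv⟩ : ∃ v, v = a + b + c := ⟨_, rfl⟩
  obtain ⟨w, hw⟩ : ∃ w, w = d + e + f := ⟨_, rfl⟩
  have e1 : v ^ 2 - w ^ 2 = -2 * (p * r - q * s) := by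
    subst hp hq hr hs hv hw; linear_combination 3 * h1 - 3 * h2
  have e2 : 2 * v * w - w ^ 2 = -2 * (p * s + q * r - q * s) := by
    subst hp hq hr hs hv hw; linear_combination 6 * h3 - 3 * h2
  have e3 : 9 * k = (p ^ 2 - p * q + q ^ 2) + (r ^ 2 - r * s + s ^ 2)
      + (v ^ 2 - v * w + w ^ 2) := by
    subst hp hq hr hs hv hw; linear_combination -3 * h1 - 3 * h2 + 3 * h3
  have e4 : (v ^ 2 - v * w + w ^ 2) ^ 2
      = 4 * (p ^ 2 - p * q + q ^ 2) * (r ^ 2 - r * s + s ^ 2) := by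
    have : (v ^ 2 - v * w + w ^ 2) ^ 2 = (v ^ 2 - w ^ 2) ^ 2
      - (v ^ 2 - w ^ 2) * (2 * v * w - w ^ 2) + (2 * v * w - w ^ 2) ^ 2 := by ring
    rw [this, e1, e2]; ring
  have nn : ∀ x y : ℤ, 0 ≤ x ^ 2 - x * y + y ^ 2 := fun x y => by
    nlinarith [sq_nonneg (x - y), sq_nonneg x, sq_nonneg y]
  rcases (nn p q).eq_or_lt with h0 | h0
  · rw [← h0] at e4 e3
    have h5 : v ^ 2 - v * w + w ^ 2 = 0 := by
      apply pow_eq_zero_iff (two_ne_zero) |>.mp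
      rw [e4]; ring
    exact eq_aux_descent k _ 3 r s rfl (by norm_num) (by linarith)
  · refine eq_aux_descent k _ (2 * (p ^ 2 - p * q + q ^ 2) + (v ^ 2 - v * w + w ^ 2))
      (6 * k * p) (6 * k * q) rfl (by linarith [nn v w]) ?_
    have h6 : (2 * (p ^ 2 - p * q + q ^ 2) + (v ^ 2 - v * w + w ^ 2)) ^ 2
        = 36 * k * (p ^ 2 - p * q + q ^ 2) := by
      linear_combination e4 - 4 * (p ^ 2 - p * q + q ^ 2) * e3
    rw [h6]; ring

/-- An equilateral triangle with vertices in `ℤ³` and side length `l > 0`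
exists iff `l = √(2(m² - mn + n²))` for some integers `m, n` not both zero. -/
theorem equilateral_side_characterization (l : ℝ) (hl : 0 < l) :
    (∃ A B C : ℤ × ℤ × ℤ, A ≠ B ∧ B ≠ C ∧ A ≠ C ∧
      (((A.1 - B.1) ^ 2 + (A.2.1 - B.2.1) ^ 2 + (A.2.2 - B.2.2) ^ 2 : ℤ) : ℝ) = l ^ 2 ∧
      (((B.1 - C.1) ^ 2 + (B.2.1 - C.2.1) ^ 2 + (B.2.2 - C.2.2) ^ 2 : ℤ) : ℝ) = l ^ 2 ∧
      (((A.1 - C.1) ^ 2 + (A.2.1 - C.2.1) ^ 2 + (A.2.2 - C.2.2) ^ 2 : ℤ) : ℝ) = l ^ 2) ↔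
    (∃ m n : ℤ, ¬(m = 0 ∧ n = 0) ∧
      l = Real.sqrt (2 * ((m : ℝ) ^ 2 - m * n + n ^ 2))) := by
  constructor
  · rintro ⟨⟨a1, a2, a3⟩, ⟨b1, b2, b3⟩, ⟨c1, c2, c3⟩, -, -, -, h1, h2, h3⟩
    simp only at h1 h2 h3
    have h12 := h1.trans h2.symm
    have h13 := h1.trans h3.symm
    norm_cast at h12 h13
    obtain ⟨k, hk⟩ : ∃ k, k = (a1 - c1) * (b1 - c1) + (a2 - c2) * (b2 - c2)
      + (a3 - c3) * (b3 - c3) := ⟨_, rfl⟩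
    have hA : (a1 - c1) ^ 2 + (a2 - c2) ^ 2 + (a3 - c3) ^ 2 = 2 * k := by
      rw [hk]; linear_combination h12 - h13 - (h12 - h13) + h12
    have hB : (b1 - c1) ^ 2 + (b2 - c2) ^ 2 + (b3 - c3) ^ 2 = 2 * k := by
      rw [hk]; linear_combination h13
    have hl2 : ((2 * k : ℤ) : ℝ) = l ^ 2 := by rw [← hA]; exact h3
    have hkpos : 0 < k := by
      have : (0 : ℝ) < ((2 * k : ℤ) : ℝ) := by rw [hl2]; positivity
      have : 0 < 2 * k := by exact_mod_cast this
      omega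
    obtain ⟨m, n, hmn⟩ := eq_aux_main _ _ _ _ _ _ k hkpos hA hB hk.symm
    refine ⟨m, n, ?_, ?_⟩
    · rintro ⟨rfl, rfl⟩
      simp at hmn; omega
    · have : 2 * ((m : ℝ) ^ 2 - m * n + n ^ 2) = l ^ 2 := by
        rw [← hl2, hmn]; push_cast; ring
      rw [this, Real.sqrt_sq hl.le]
  · rintro ⟨m, n, -, h⟩
    have hl2 : l ^ 2 = 2 * ((m : ℝ) ^ 2 - m * n + n ^ 2) := by
      rw [h, Real.sq_sqrt]
      nlinarith [sq_nonneg ((m : ℝ) - n), sq_nonneg (m : ℝ), sq_nonneg (n : ℝ)]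
    have hp : 0 < l ^ 2 := by positivity
    have key : ∀ A B : ℤ × ℤ × ℤ,
      (((A.1 - B.1) ^ 2 + (A.2.1 - B.2.1) ^ 2 + (A.2.2 - B.2.2) ^ 2 : ℤ) : ℝ) = l ^ 2 →
        A ≠ B := by
      rintro A B hAB rfl
      simp at hAB
      exact hp.ne hAB
    have k1 : (((0 - m) ^ 2 + (0 - -n) ^ 2 + (0 - (n - m)) ^ 2 : ℤ) : ℝ) = l ^ 2 := by
      rw [hl2]; push_cast; ring
    have k2 : (((m - n) ^ 2 + (-n - (m - n)) ^ 2 + ((n - m) - -m) ^ 2 : ℤ) : ℝ) = l ^ 2 := by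
      rw [hl2]; push_cast; ring
    have k3 : (((0 - n) ^ 2 + (0 - (m - n)) ^ 2 + (0 - -m) ^ 2 : ℤ) : ℝ) = l ^ 2 := by
      rw [hl2]; push_cast; ring
    exact ⟨(0, 0, 0), (m, -n, n - m), (n, m - n, -m), key _ _ k1, key _ _ k2, key _ _ k3,
      k1, k2, k3⟩
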